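/- Let ⟨G, Eℓ⟩ be a two-player game graph with live edges and let (A, F) be a GR(1) winning condition with A = {A_1, …, A_r} and F = {F_1, …, F_s}, where A_a, F_b ⊆ V. Define Z* := νY_k. ⋂_{b=1}^{s} μ X_b. ⋃_{a=1}^{r} νY_a. [ (F_b ∩ Cpre(Y_k)) ∪ Apre(Y_k, X_b) ∪ ((V ∖ A_a) ∩ Cpre(Y_a)) ]. Then Z* equals the winning region W of Player 0 in the fair adversarial game over ⟨G, Eℓ⟩ for the GR(1) winning condition φ = ( ⋀_{a=1}^{r} □◇A_a ) → ( ⋀_{b=1}^{s} □◇F_b ), i.e. the set of plays π such that if every A_a is visited infinitely often by π then every F_b is visited infinitely often by π. Moreover, there exists a finite-memory Player-0 strategy that wins the fair adversarial game for φ from every vertex of Z*. -/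

import Mathlib

/-- Least fixed point of a set transformer (Knaster–Tarski form). -/
def lfpSet {V : Type*} (f : Set V → Set V) : Set V := sInf {X | f X ⊆ X}

/-- Greatest fixed point of a set transformer (Knaster–Tarski form). -/
def gfpSet {V : Type*} (f : Set V → Set V) : Set V := sSup {X | X ⊆ f X}

/-- A two-player game graph with live edges: vertices are partitioned into
Player-0 vertices `V0` and Player-1 vertices `V1`, every vertex has a successor,
and live edges `El` are Player-1 edges. -/
structure LiveGameGraph (V : Type*) where
  V0 : Set V
  V1 : Set V
  E : V → V → Prop
  El : V → V → Prop
  cover : V0 ∪ V1 = Set.univ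
  disj : V0 ∩ V1 = ∅
  succ_nonempty : ∀ v : V, ∃ w, E v w
  live_sub : ∀ v w, El v w → v ∈ V1 ∧ E v w

namespace LiveGameGraph

variable {V : Type*}

/-- Pre∃0(S) -/
def pre0 (Gm : LiveGameGraph V) (S : Set V) : Set V :=
  {v | v ∈ Gm.V0 ∧ ∃ w, Gm.E v w ∧ w ∈ S}

/-- Pre∀1(S) -/
def pre1 (Gm : LiveGameGraph V) (S : Set V) : Set V :=
  {v | v ∈ Gm.V1 ∧ ∀ w, Gm.E v w → w ∈ S}

/-- Cpre(S) -/
def cpre (Gm : LiveGameGraph V) (S : Set V) : Set V := Gm.pre0 S ∪ Gm.pre1 S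

/-- Lpre∃(T) -/
def lpre (Gm : LiveGameGraph V) (T : Set V) : Set V :=
  {v | ∃ w, Gm.El v w ∧ w ∈ T}

/-- Apre(S,T) -/
def apre (Gm : LiveGameGraph V) (S T : Set V) : Set V :=
  Gm.cpre T ∪ (Gm.lpre T ∩ Gm.pre1 S)

end LiveGameGraph

namespace LiveGameGraph

variable {V : Type*}

/-- A play is strongly transition fair if every live edge whose source is visited
infinitely often is itself taken infinitely often. -/
def StronglyFair (Gm : LiveGameGraph V) (π : ℕ → V) : Prop :=
  ∀ v w, Gm.El v w → {i | π i = v}.Infinite → {i | π i = v ∧ π (i + 1) = w}.Infinite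

/-- A Player-0 strategy: given the history (the prefix before the current vertex)
and the current vertex, it chooses an `E`-successor whenever the current vertex
belongs to Player 0. -/
def Strategy0 (Gm : LiveGameGraph V) (ρ : List V → V → V) : Prop :=
  ∀ h v, v ∈ Gm.V0 → Gm.E v (ρ h v)

/-- A Player-1 strategy. -/
def Strategy1 (Gm : LiveGameGraph V) (ρ : List V → V → V) : Prop :=
  ∀ h v, v ∈ Gm.V1 → Gm.E v (ρ h v)

/-- The play compliant with the strategies `ρ0` and `ρ1` starting at `v0`. -/
def Compliant (Gm : LiveGameGraph V) (ρ0 ρ1 : List V → V → V) (v0 : V)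
    (π : ℕ → V) : Prop :=
  π 0 = v0 ∧ ∀ i : ℕ,
    (π i ∈ Gm.V0 → π (i + 1) = ρ0 (List.ofFn fun j : Fin i => π j.1) (π i)) ∧
    (π i ∈ Gm.V1 → π (i + 1) = ρ1 (List.ofFn fun j : Fin i => π j.1) (π i))

/-- Player 0 wins the fair adversarial game for the winning condition `φ`
from `v0` using the strategy `ρ0`. -/
def WinsFrom (Gm : LiveGameGraph V) (φ : (ℕ → V) → Prop)
    (ρ0 : List V → V → V) (v0 : V) : Prop :=
  Gm.Strategy0 ρ0 ∧ ∀ ρ1, Gm.Strategy1 ρ1 → ∀ π, Gm.Compliant ρ0 ρ1 v0 π →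
    (Gm.StronglyFair π → φ π)

/-- The winning region of Player 0 in the fair adversarial game for `φ`. -/
def WinningRegion (Gm : LiveGameGraph V) (φ : (ℕ → V) → Prop) : Set V :=
  {v0 | ∃ ρ0, Gm.WinsFrom φ ρ0 v0}

end LiveGameGraph

namespace FairGR1

variable {V : Type*}

lemma lfp_le {f : Set V → Set V} {X : Set V} (h : f X ⊆ X) : lfpSet f ⊆ X :=
  sInf_le h

lemma le_gfp {f : Set V → Set V} {X : Set V} (h : X ⊆ f X) : X ⊆ gfpSet f :=
  le_sSup (a := X) h

lemma lfp_fix {f : Set V → Set V} (hf : Monotone f) : f (lfpSet f) = lfpSet f := by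
  have h1 : f (lfpSet f) ⊆ lfpSet f := le_sInf fun X hX => (hf (lfp_le hX)).trans hX
  exact h1.antisymm (lfp_le (hf h1))

lemma gfp_fix {f : Set V → Set V} (hf : Monotone f) : f (gfpSet f) = gfpSet f := by
  have h1 : gfpSet f ⊆ f (gfpSet f) := sSup_le fun X hX => le_trans hX (hf (le_gfp hX))
  exact Set.Subset.antisymm (le_gfp (hf h1)) h1

lemma lfp_mono {f g : Set V → Set V} (h : ∀ S, f S ⊆ g S) : lfpSet f ⊆ lfpSet g :=
  le_sInf fun _ hX => lfp_le ((h _).trans hX)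

lemma gfp_mono {f g : Set V → Set V} (h : ∀ S, f S ⊆ g S) : gfpSet f ⊆ gfpSet g :=
  sSup_le fun _ hX => le_gfp (le_trans hX (h _))

lemma gfp_compl (f : Set V → Set V) : (gfpSet f)ᶜ = lfpSet (fun S => (f Sᶜ)ᶜ) := by
  apply Set.Subset.antisymm
  · refine le_sInf fun X hX => ?_
    have : Xᶜ ⊆ gfpSet f := le_gfp (Set.compl_subset_comm.mp hX)
    exact Set.compl_subset_comm.mp this
  · rw [Set.subset_compl_comm]
    refine sSup_le fun X hX => ?_
    show X ⊆ _
    rw [Set.subset_compl_comm]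
    apply lfp_le
    simpa using hX

lemma rank_lfp [Finite V] {f : Set V → Set V} (hf : Monotone f) :
    ∃ rk : V → ℕ, ∀ k v, v ∈ f {w | w ∈ lfpSet f ∧ rk w < k} ↔ v ∈ lfpSet f ∧ rk v ≤ k := by
  classical
  let U : ℕ → Set V := fun n => f^[n] ∅
  have hUs : ∀ n, U (n + 1) = f (U n) := fun n => Function.iterate_succ_apply' f n ∅
  have hUm : Monotone U := by
    apply monotone_nat_of_le_succ
    intro n
    induction n with
    | zero => exact Set.empty_subset _
    | succ n ih => rw [hUs, hUs (n + 1)]; exact hf ih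
  obtain ⟨N, hN⟩ := WellFoundedGT.monotone_chain_condition ⟨U, hUm⟩
  have hN1 : f (U N) ⊆ U N := by
    rw [← hUs]; exact (hN (N + 1) (Nat.le_succ N)).symm.le
  have hle : ∀ n, U n ⊆ lfpSet f := by
    intro n
    induction n with
    | zero => exact Set.empty_subset _
    | succ n ih => rw [hUs, ← lfp_fix hf]; exact hf ih
  have hex : ∀ v ∈ lfpSet f, ∃ n, v ∈ U (n + 1) :=
    fun v hv => ⟨N, hUm (Nat.le_succ N) (lfp_le hN1 hv)⟩
  let rk : V → ℕ := fun v => sInf {n | v ∈ U (n + 1)}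
  have key : ∀ k v, v ∈ U (k + 1) ↔ v ∈ lfpSet f ∧ rk v ≤ k := by
    intro k v
    constructor
    · intro h
      exact ⟨hle _ h, Nat.sInf_le h⟩
    · rintro ⟨h, h2⟩
      have : v ∈ U (rk v + 1) := Nat.sInf_mem (s := {n | v ∈ U (n + 1)}) (hex v h)
      exact hUm (by omega) this
  have heq : ∀ k, {w | w ∈ lfpSet f ∧ rk w < k} = U k := by
    intro k
    ext v
    cases k with
    | zero => simp [U]
    | succ k => rw [key]; simp
  refine ⟨rk, fun k v => ?_⟩
  rw [heq, ← hUs, key]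

lemma rank_gfp [Finite V] {f : Set V → Set V} (hf : Monotone f) :
    ∃ rk : V → ℕ, ∀ k v, v ∉ f {w | w ∉ gfpSet f ∧ rk w < k}ᶜ ↔ v ∉ gfpSet f ∧ rk v ≤ k := by
  have hm : Monotone (fun S => (f Sᶜ)ᶜ) := by
    intro S T h
    exact Set.compl_subset_compl.mpr (hf (Set.compl_subset_compl.mpr h))
  obtain ⟨rk, h⟩ := rank_lfp hm
  rw [← gfp_compl] at h
  exact ⟨rk, h⟩

/-- Holds at infinitely many positions. -/
def InfOft (P : ℕ → Prop) : Prop := ∀ N, ∃ i ≥ N, P i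

lemma infinite_iff (P : ℕ → Prop) : {i | P i}.Infinite ↔ InfOft P := by
  rw [← Nat.frequently_atTop_iff_infinite, Filter.frequently_atTop]
  rfl

lemma eventually_inf [Finite V] (π : ℕ → V) : ∃ M, ∀ i ≥ M, InfOft fun j => π j = π i := by
  classical
  have : Fintype V := Fintype.ofFinite V
  have h : ∀ v : V, ∃ N, (¬ InfOft fun j => π j = v) → ∀ i ≥ N, π i ≠ v := by
    intro v
    by_cases hv : InfOft fun j => π j = v
    · exact ⟨0, fun h => absurd hv h⟩
    · unfold InfOft at hv
      push Not at hv
      obtain ⟨N, hN⟩ := hv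
      exact ⟨N, fun _ => hN⟩
  choose N hN using h
  refine ⟨Finset.univ.sup N, fun i hi => ?_⟩
  by_contra hc
  exact hN (π i) hc i (le_trans (Finset.le_sup (Finset.mem_univ _)) hi) rfl

lemma exists_min [Finite V] (π : ℕ → V) (m : V → ℕ) :
    ∃ v M, (InfOft fun j => π j = v) ∧
      ∀ i ≥ M, m v ≤ m (π i) ∧ InfOft fun j => π j = π i := by
  obtain ⟨M, hM⟩ := eventually_inf π
  have hne : {k | ∃ i ≥ M, m (π i) = k}.Nonempty := ⟨_, M, le_rfl, rfl⟩
  obtain ⟨i, hi, hk⟩ := Nat.sInf_mem hne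
  refine ⟨π i, M, hM i hi, fun j hj => ⟨?_, hM j hj⟩⟩
  rw [hk]
  exact Nat.sInf_le ⟨j, hj, rfl⟩

lemma lexlt {s a b a' b' : ℕ} (hb : b ≤ s) (h : a < a') :
    a * (s + 1) + b < a' * (s + 1) + b' := by nlinarith

lemma lexenc {s a b a' b' : ℕ} (hb : b ≤ s) (hb' : b' ≤ s)
    (h : a * (s + 1) + b = a' * (s + 1) + b') : a = a' ∧ b = b' := by
  have : a = a' := by
    rcases lt_trichotomy a a' with h1 | h1 | h1
    · exact absurd h (lexlt hb h1).ne
    · exact h1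
    · exact absurd h (lexlt hb' h1).ne'
  subst this
  exact ⟨rfl, by omega⟩

lemma cpre_mono (Gm : LiveGameGraph V) {S T : Set V} (h : S ⊆ T) : Gm.cpre S ⊆ Gm.cpre T := by
  rintro v (⟨h0, w, hw, hS⟩ | ⟨h1, hS⟩)
  · exact Or.inl ⟨h0, w, hw, h hS⟩
  · exact Or.inr ⟨h1, fun w hw => h (hS w hw)⟩

lemma apre_mono (Gm : LiveGameGraph V) {S S' T T' : Set V} (hS : S ⊆ S') (h : T ⊆ T') :
    Gm.apre S T ⊆ Gm.apre S' T' := by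
  rintro v (hv | ⟨⟨w, hw, hT⟩, h1, h2⟩)
  · exact Or.inl (cpre_mono Gm h hv)
  · exact Or.inr ⟨⟨w, hw, h hT⟩, h1, fun w hw => hS (h2 w hw)⟩

/-- Innermost body of the fixpoint expression. -/
def HH (Gm : LiveGameGraph V) (Fb Aa Yk X Y : Set V) : Set V :=
  (Fb ∩ Gm.cpre Yk) ∪ Gm.apre Yk X ∪ (Aaᶜ ∩ Gm.cpre Y)

/-- Body of the least fixed point. -/
def GG (Gm : LiveGameGraph V) (r : ℕ) (A : ℕ → Set V) (Fb Yk X : Set V) : Set V :=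
  ⋃ a ∈ Finset.Icc 1 r, gfpSet (HH Gm Fb (A a) Yk X)

/-- Body of the outer greatest fixed point. -/
def PP (Gm : LiveGameGraph V) (r s : ℕ) (A F : ℕ → Set V) (Yk : Set V) : Set V :=
  ⋂ b ∈ Finset.Icc 1 s, lfpSet (GG Gm r A (F b) Yk)

lemma HH_mono (Gm : LiveGameGraph V) (Fb Aa : Set V) {Yk Yk' X X' Y Y' : Set V}
    (h1 : Yk ⊆ Yk') (h2 : X ⊆ X') (h3 : Y ⊆ Y') :
    HH Gm Fb Aa Yk X Y ⊆ HH Gm Fb Aa Yk' X' Y' := by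
  unfold HH
  exact Set.union_subset_union (Set.union_subset_union
    (Set.inter_subset_inter_right _ (cpre_mono Gm h1)) (apre_mono Gm h1 h2))
    (Set.inter_subset_inter_right _ (cpre_mono Gm h3))

lemma HH_m (Gm : LiveGameGraph V) (Fb Aa Yk X : Set V) : Monotone (HH Gm Fb Aa Yk X) :=
  fun _ _ h => HH_mono Gm _ _ le_rfl le_rfl h

lemma GG_mono (Gm : LiveGameGraph V) (r : ℕ) (A : ℕ → Set V) (Fb : Set V) {Yk Yk' X X' : Set V}
    (h1 : Yk ⊆ Yk') (h2 : X ⊆ X') : GG Gm r A Fb Yk X ⊆ GG Gm r A Fb Yk' X' := by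
  unfold GG
  exact Set.iUnion₂_mono fun a _ => gfp_mono fun S => HH_mono Gm _ _ h1 h2 le_rfl

lemma GG_m (Gm : LiveGameGraph V) (r : ℕ) (A : ℕ → Set V) (Fb Yk : Set V) :
    Monotone (GG Gm r A Fb Yk) := fun _ _ h => GG_mono Gm _ _ _ le_rfl h

lemma PP_m (Gm : LiveGameGraph V) (r s : ℕ) (A F : ℕ → Set V) : Monotone (PP Gm r s A F) := by
  intro S T h
  unfold PP
  exact Set.iInter₂_mono fun b _ => lfp_mono fun S => GG_mono Gm _ _ _ h le_rfl

lemma L_eq (Gm : LiveGameGraph V) (r s : ℕ) (A F : ℕ → Set V) {Z : Set V}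
    (hZ : PP Gm r s A F Z = Z) {b : ℕ} (hb : b ∈ Finset.Icc 1 s) :
    lfpSet (GG Gm r A (F b) Z) = Z := by
  have hsub : ∀ b ∈ Finset.Icc 1 s, Z ⊆ lfpSet (GG Gm r A (F b) Z) := by
    intro b hb
    conv_lhs => rw [← hZ]
    exact Set.biInter_subset_of_mem hb
  refine Set.Subset.antisymm ?_ (hsub b hb)
  refine Set.Subset.trans ?_ hZ.le
  refine Set.subset_iInter₂ fun b' hb' => lfp_le ?_
  conv_rhs => rw [← lfp_fix (GG_m Gm r A (F b') Z)]
  refine Set.iUnion₂_mono fun a _ => gfp_mono fun S => ?_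
  rintro v ((⟨_, hv⟩ | hv) | hv)
  · exact Or.inl (Or.inr (Or.inl (cpre_mono Gm (hsub b' hb') hv)))
  · exact Or.inl (Or.inr hv)
  · exact Or.inr hv

/-- Progress condition of the Player-0 strategy. -/
def Prog (Gm : LiveGameGraph V) (A : ℕ → Set V) (m α : V → ℕ) (v w : V) : Prop :=
  m w < m v ∨ (∃ u, Gm.El v u ∧ m u < m v) ∨ (v ∉ A (α v) ∧ m w = m v ∧ α w = α v)

lemma sound_data [Finite V] (Gm : LiveGameGraph V) (r s : ℕ) (A F : ℕ → Set V) {Z : Set V}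
    (hZ : PP Gm r s A F Z = Z) {b : ℕ} (hb : b ∈ Finset.Icc 1 s) :
    ∃ m α : V → ℕ, ∀ v ∈ Z, α v ∈ Finset.Icc 1 r ∧
      v ∈ Gm.cpre {w | w ∈ Z ∧ (v ∈ F b ∨ Prog Gm A m α v w)} := by
  classical
  obtain ⟨rk, hrk⟩ := rank_lfp (GG_m Gm r A (F b) Z)
  rw [L_eq Gm r s A F hZ hb] at hrk
  let X : ℕ → Set V := fun k => {w | w ∈ Z ∧ rk w < k}
  let Q : V → Set ℕ := fun v =>
    {a | a ∈ Finset.Icc 1 r ∧ v ∈ gfpSet (HH Gm (F b) (A a) Z (X (rk v)))}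
  let α : V → ℕ := fun v => sInf (Q v)
  have hα : ∀ v ∈ Z, α v ∈ Q v := by
    intro v hv
    apply Nat.sInf_mem
    have := (hrk (rk v) v).mpr ⟨hv, le_rfl⟩
    simp only [GG, Set.mem_iUnion] at this
    obtain ⟨a, ha, h⟩ := this
    exact ⟨a, ha, h⟩
  have hαr : ∀ v ∈ Z, α v ≤ r := fun v hv => (Finset.mem_Icc.mp (hα v hv).1).2
  let m : V → ℕ := fun v => rk v * (r + 1) + α v
  have hlt : ∀ v w, w ∈ X (rk v) → m w < m v := fun v w hw => lexlt (hαr w hw.1) hw.2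
  refine ⟨m, α, fun v hv => ⟨(hα v hv).1, ?_⟩⟩
  have h := (hα v hv).2
  rw [← gfp_fix (HH_m _ _ _ _ _)] at h
  rcases h with ((⟨hF, hv1⟩ | (hv1 | ⟨⟨u, hu, huX⟩, hv1⟩)) | ⟨hA, hv1⟩)
  · refine cpre_mono Gm (fun w hw => ?_) hv1
    exact ⟨hw, Or.inl hF⟩
  · refine cpre_mono Gm (fun w hw => ?_) hv1
    exact ⟨hw.1, Or.inr (Or.inl (hlt v w hw))⟩
  · refine cpre_mono Gm (fun w hw => ?_) (Or.inr hv1)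
    exact ⟨hw, Or.inr (Or.inr (Or.inl ⟨u, hu, hlt v u huX⟩))⟩
  · refine cpre_mono Gm (fun w hw => ?_) hv1
    have hw1 : w ∈ GG Gm r A (F b) Z (X (rk v)) := Set.mem_biUnion (hα v hv).1 hw
    obtain ⟨hwZ, hle⟩ := (hrk _ _).mp hw1
    refine ⟨hwZ, Or.inr ?_⟩
    rcases hle.lt_or_eq with h | h
    · exact Or.inl (hlt v w ⟨hwZ, h⟩)
    · have hmem : α v ∈ Q w := by
        refine ⟨(hα v hv).1, ?_⟩
        rw [h]; exact hw
      have hle2 : α w ≤ α v := Nat.sInf_le hmem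
      rcases hle2.lt_or_eq with h2 | h2
      · left
        show rk w * (r + 1) + α w < rk v * (r + 1) + α v
        rw [h]; omega
      · right; right
        refine ⟨hA, ?_, h2⟩
        show rk w * (r + 1) + α w = rk v * (r + 1) + α v
        rw [h, h2]

lemma sound_strat [Finite V] (Gm : LiveGameGraph V) (r s : ℕ) (A F : ℕ → Set V) {Z : Set V}
    (hZ : PP Gm r s A F Z = Z) {b : ℕ} (hb : b ∈ Finset.Icc 1 s) :
    ∃ (m α : V → ℕ) (c : V → V), (∀ v ∈ Z, α v ∈ Finset.Icc 1 r) ∧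
      (∀ v ∈ Gm.V0, Gm.E v (c v)) ∧
      ∀ v ∈ Z, ∀ w, Gm.E v w → (v ∈ Gm.V0 → w = c v) →
        w ∈ Z ∧ (v ∈ F b ∨ Prog Gm A m α v w) := by
  classical
  obtain ⟨m, α, h⟩ := sound_data Gm r s A F hZ hb
  have hc : ∀ v, ∃ w, Gm.E v w ∧
      (v ∈ Z → v ∈ Gm.V0 → w ∈ Z ∧ (v ∈ F b ∨ Prog Gm A m α v w)) := by
    intro v
    by_cases hv : v ∈ Z ∧ v ∈ Gm.V0
    · rcases (h v hv.1).2 with ⟨_, w, hw, hS⟩ | ⟨h1, _⟩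
      · exact ⟨w, hw, fun _ _ => hS⟩
      · have : v ∈ Gm.V0 ∩ Gm.V1 := ⟨hv.2, h1⟩
        rw [Gm.disj] at this
        exact this.elim
    · obtain ⟨w, hw⟩ := Gm.succ_nonempty v
      exact ⟨w, hw, fun h1 h2 => absurd ⟨h1, h2⟩ hv⟩
  choose c hc using hc
  refine ⟨m, α, c, fun v hv => (h v hv).1, fun v _ => (hc v).1, fun v hv w hw hwc => ?_⟩
  rcases (h v hv).2 with ⟨h0, _⟩ | ⟨_, h1⟩
  · rw [hwc h0]; exact (hc v).2 hv h0
  · exact h1 w hw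

lemma sound_core [Finite V] (Gm : LiveGameGraph V) (A : ℕ → Set V) (m α : V → ℕ) (π : ℕ → V)
    (hfair : Gm.StronglyFair π) (N : ℕ) (hp : ∀ i ≥ N, Prog Gm A m α (π i) (π (i + 1))) :
    ∃ i, ¬ InfOft fun j => π j ∈ A (α (π i)) := by
  obtain ⟨v, M, hv, hM⟩ := exists_min π m
  obtain ⟨i, hi, hiv⟩ := hv (max M N)
  have step : ∀ j, i ≤ j → m (π j) = m v →
      π j ∉ A (α (π j)) ∧ m (π (j + 1)) = m (π j) ∧ α (π (j + 1)) = α (π j) := by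
    intro j hj hm
    have hjM : M ≤ j := by omega
    rcases hp j (by omega) with h | ⟨u, hu, hlt⟩ | h
    · have := (hM (j + 1) (by omega)).1
      omega
    · have h1 := hfair _ _ hu ((infinite_iff _).mpr (hM j hjM).2)
      obtain ⟨k, hk, _, hk2⟩ := (infinite_iff _).mp h1 M
      have := (hM (k + 1) (by omega)).1
      rw [hk2] at this
      omega
    · exact h
  refine ⟨i, fun hio => ?_⟩
  obtain ⟨j, hj, hA⟩ := hio i
  have h2 : ∀ j, i ≤ j → m (π j) = m v ∧ α (π j) = α (π i) := by
    intro j hj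
    induction j, hj using Nat.le_induction with
    | base => exact ⟨by rw [hiv], rfl⟩
    | succ j hj ih =>
      obtain ⟨_, h1, h2⟩ := step j hj ih.1
      exact ⟨h1.trans ih.1, h2.trans ih.2⟩
  have h3 := h2 j hj
  rw [← h3.2] at hA
  exact (step j hj h3.1).1 hA

lemma ofFn_hist (π : ℕ → V) (i : ℕ) :
    (List.ofFn fun j : Fin (i + 1) => π j.1) = (List.ofFn fun j : Fin i => π j.1) ++ [π i] := by
  rw [List.ofFn_succ']
  simp [List.concat_eq_append]

lemma v0_or_v1 (Gm : LiveGameGraph V) (v : V) : v ∈ Gm.V0 ∨ v ∈ Gm.V1 := by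
  have : v ∈ Gm.V0 ∪ Gm.V1 := by rw [Gm.cover]; trivial
  exact this

lemma not_v0_v1 (Gm : LiveGameGraph V) {v : V} (h0 : v ∈ Gm.V0) (h1 : v ∈ Gm.V1) : False := by
  have : v ∈ Gm.V0 ∩ Gm.V1 := ⟨h0, h1⟩
  rw [Gm.disj] at this
  exact this

lemma compliant_E (Gm : LiveGameGraph V) {ρ0 ρ1 : List V → V → V} {v0 : V} {π : ℕ → V}
    (h0 : Gm.Strategy0 ρ0) (h1 : Gm.Strategy1 ρ1) (h : Gm.Compliant ρ0 ρ1 v0 π) (i : ℕ) :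
    Gm.E (π i) (π (i + 1)) := by
  rcases v0_or_v1 Gm (π i) with hv | hv
  · rw [(h.2 i).1 hv]; exact h0 _ _ hv
  · rw [(h.2 i).2 hv]; exact h1 _ _ hv

lemma sound [Finite V] (Gm : LiveGameGraph V) (r n : ℕ) (A F : ℕ → Set V) {Z : Set V}
    (hZ : PP Gm r (n + 1) A F Z = Z) :
    ∃ (upd : Fin (n + 1) → V → Fin (n + 1)) (c : Fin (n + 1) → V → V),
      (∀ m v, v ∈ Gm.V0 → Gm.E v (c m v)) ∧
      ∀ v0 ∈ Z,
        Gm.WinsFrom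
          (fun π => (∀ a ∈ Finset.Icc 1 r, ∀ N, ∃ i ≥ N, π i ∈ A a) →
            ∀ b ∈ Finset.Icc 1 (n + 1), ∀ N, ∃ i ≥ N, π i ∈ F b)
          (fun h v => c (List.foldl upd 0 h) v) v0 := by
  classical
  have hb : ∀ b : Fin (n + 1), b.1 + 1 ∈ Finset.Icc 1 (n + 1) := by
    intro b; rw [Finset.mem_Icc]; omega
  choose m α c hα hcE hc using fun b : Fin (n + 1) => sound_strat Gm r (n + 1) A F hZ (hb b)
  let upd : Fin (n + 1) → V → Fin (n + 1) := fun b v => if v ∈ F (b.1 + 1) then b + 1 else b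
  refine ⟨upd, c, hcE, fun v0 hv0 => ⟨fun h v hv => hcE _ v hv, ?_⟩⟩
  intro ρ1 hρ1 π hπ hfair hA
  let q : ℕ → Fin (n + 1) := fun i => List.foldl upd 0 (List.ofFn fun j : Fin i => π j.1)
  have hq : ∀ i, q (i + 1) = upd (q i) (π i) := by
    intro i
    show List.foldl upd 0 _ = _
    rw [ofFn_hist, List.foldl_append]
    rfl
  have hE := compliant_E Gm (fun h v hv => hcE _ v hv) hρ1 hπ
  have hstep : ∀ i, π i ∈ Z → π (i + 1) ∈ Z ∧
      (π i ∈ F ((q i).1 + 1) ∨ Prog Gm A (m (q i)) (α (q i)) (π i) (π (i + 1))) :=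
    fun i hi => hc (q i) (π i) hi _ (hE i) (hπ.2 i).1
  have hin : ∀ i, π i ∈ Z := by
    intro i
    induction i with
    | zero => rw [hπ.1]; exact hv0
    | succ i ih => exact (hstep i ih).1
  -- the current target is met again and again
  have hev : ∀ N, ∃ i ≥ N, π i ∈ F ((q i).1 + 1) := by
    intro N
    by_contra hcon
    push Not at hcon
    have hconst : ∀ i ≥ N, q i = q N := by
      intro i hi
      induction i, hi using Nat.le_induction with
      | base => rfl
      | succ i hi ih =>
        rw [hq]
        show (if _ then _ else _) = _
        rw [if_neg (hcon i hi), ih]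
    obtain ⟨i, hi⟩ := sound_core Gm A (m (q N)) (α (q N)) π hfair N (by
      intro i hi
      have := ((hstep i (hin i)).2).resolve_left (hcon i hi)
      rwa [hconst i hi] at this)
    exact hi (hA _ (hα _ _ (hin i)))
  have hnext : ∀ N, ∃ i ≥ N, q i = q N ∧ π i ∈ F ((q i).1 + 1) := by
    intro N
    have hex : ∃ k, π (N + k) ∈ F ((q (N + k)).1 + 1) := by
      obtain ⟨i, hi, h⟩ := hev N
      exact ⟨i - N, by rwa [Nat.add_sub_cancel' hi]⟩
    have hk : ∀ k ≤ Nat.find hex, q (N + k) = q N := by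
      intro k
      induction k with
      | zero => intro _; rfl
      | succ k ih =>
        intro hk
        rw [← add_assoc, hq]
        show (if _ then _ else _) = _
        rw [if_neg (Nat.find_min hex (by omega)), ih (by omega)]
    exact ⟨N + Nat.find hex, by omega, hk _ le_rfl, Nat.find_spec hex⟩
  have hcyc : ∀ N k (hk : k < n + 1), ∃ i ≥ N, q i = q N + ⟨k, hk⟩ ∧ π i ∈ F ((q i).1 + 1) := by
    intro N k
    induction k with
    | zero => intro hk; simpa using hnext N
    | succ k ih =>
      intro hk
      obtain ⟨i, hi, hqi, hF⟩ := ih (by omega)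
      obtain ⟨j, hj, hqj, hFj⟩ := hnext (i + 1)
      refine ⟨j, by omega, ?_, hFj⟩
      rw [hqj, hq]
      show (if _ then _ else _) = _
      rw [if_pos hF, hqi]
      rw [add_assoc]
      congr 1
      apply Fin.ext
      rw [Fin.val_add, Fin.val_one']
      rw [Nat.mod_eq_of_lt (show 1 < n + 1 by omega), Nat.mod_eq_of_lt hk]
  intro b hbm N
  rw [Finset.mem_Icc] at hbm
  let b' : Fin (n + 1) := ⟨b - 1, by omega⟩
  obtain ⟨i, hi, hqi, hF⟩ := hcyc N (b' - q N).1 (b' - q N).2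
  refine ⟨i, hi, ?_⟩
  have : q i = b' := by
    rw [hqi]; show q N + (b' - q N) = b'; abel
  rw [this] at hF
  have hbb : b'.1 + 1 = b := by show b - 1 + 1 = b; omega
  rwa [hbb] at hF

lemma exists_enum [Finite V] (C : Set V) (hC : C.Nonempty) :
    ∃ e : ℕ → V, (∀ n, e n ∈ C) ∧ ∀ w ∈ C, InfOft fun n => e n = w := by
  obtain ⟨g, hg⟩ := (Set.toFinite C).countable.exists_eq_range hC
  refine ⟨fun n => g n.unpair.1, fun n => ?_, fun w hw N => ?_⟩
  · rw [hg]; exact ⟨_, rfl⟩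
  · rw [hg] at hw
    obtain ⟨x, hx⟩ := hw
    exact ⟨Nat.pair x N, Nat.right_le_pair x N, by simpa using hx⟩

open Classical in
lemma count_hist (π : ℕ → V) (v : V) (i : ℕ) :
    (List.ofFn fun j : Fin i => π j.1).count v = Nat.count (fun j => π j = v) i := by
  induction i with
  | zero => simp
  | succ i ih =>
    rw [ofFn_hist, List.count_append, ih, Nat.count_succ, List.count_singleton]
    simp

/-- Player 1 can play all edges of a chosen nonempty set of edges round robin. -/
lemma exists_play [Finite V] (Gm : LiveGameGraph V) (C : V → Set V)
    (hC : ∀ v ∈ Gm.V1, (C v).Nonempty) (hCE : ∀ v w, w ∈ C v → Gm.E v w)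
    (ρ0 : List V → V → V) (v0 : V) :
    ∃ ρ1 π, Gm.Strategy1 ρ1 ∧ Gm.Compliant ρ0 ρ1 v0 π ∧
      (∀ i, π i ∈ Gm.V1 → π (i + 1) ∈ C (π i)) ∧
      ∀ v ∈ Gm.V1, (InfOft fun i => π i = v) → ∀ w ∈ C v,
        InfOft fun i => π i = v ∧ π (i + 1) = w := by
  classical
  have he : ∀ v, ∃ e : ℕ → V, v ∈ Gm.V1 →
      (∀ n, e n ∈ C v) ∧ ∀ w ∈ C v, InfOft fun n => e n = w := by
    intro v
    by_cases hv : v ∈ Gm.V1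
    · obtain ⟨e, h⟩ := exists_enum (C v) (hC v hv)
      exact ⟨e, fun _ => h⟩
    · exact ⟨fun _ => v, fun h => absurd h hv⟩
  choose e he using he
  let ρ1 : List V → V → V := fun h v => e v (h.count v)
  let nxt : List V × V → List V × V := fun p =>
    (p.1 ++ [p.2], if p.2 ∈ Gm.V0 then ρ0 p.1 p.2 else ρ1 p.1 p.2)
  let st : ℕ → List V × V := fun i => nxt^[i] ([], v0)
  let π : ℕ → V := fun i => (st i).2
  have hst : ∀ i, st (i + 1) = nxt (st i) := fun i => Function.iterate_succ_apply' nxt i _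
  have hh : ∀ i, (st i).1 = List.ofFn fun j : Fin i => π j.1 := by
    intro i
    induction i with
    | zero => simp [st]
    | succ i ih => rw [ofFn_hist, ← ih, hst]
  have hπs : ∀ i, π (i + 1) = if π i ∈ Gm.V0 then ρ0 (List.ofFn fun j : Fin i => π j.1) (π i)
      else ρ1 (List.ofFn fun j : Fin i => π j.1) (π i) := by
    intro i
    rw [← hh i]
    show (st (i + 1)).2 = _
    rw [hst]
  have hcomp : Gm.Compliant ρ0 ρ1 v0 π := by
    refine ⟨rfl, fun i => ⟨fun h => ?_, fun h => ?_⟩⟩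
    · rw [hπs, if_pos h]
    · rw [hπs, if_neg (fun h0 => not_v0_v1 Gm h0 h)]
  have h1 : ∀ i, π i ∈ Gm.V1 → π (i + 1) = e (π i) (Nat.count (fun j => π j = π i) i) := by
    intro i hi
    rw [(hcomp.2 i).2 hi, ← count_hist]
  refine ⟨ρ1, π, fun h v hv => hCE _ _ ((he v hv).1 _), hcomp, ?_, ?_⟩
  · intro i hi
    rw [h1 i hi]
    exact (he _ hi).1 _
  · intro v hv hinf w hw N
    obtain ⟨k, hk, hek⟩ := (he v hv).2 w hw N
    have hI := (infinite_iff _).mpr hinf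
    have hmem : π (Nat.nth (fun j => π j = v) k) = v := Nat.nth_mem_of_infinite hI k
    refine ⟨Nat.nth (fun j => π j = v) k,
      hk.le.trans ((Nat.nth_strictMono hI).le_apply), hmem, ?_⟩
    rw [h1 _ (by rw [hmem]; exact hv), hmem, Nat.count_nth_of_infinite hI]
    exact hek

lemma not_cpre (Gm : LiveGameGraph V) {v : V} {T : Set V} (h : v ∉ Gm.cpre T) :
    (v ∈ Gm.V0 → ∀ w, Gm.E v w → w ∉ T) ∧ (v ∈ Gm.V1 → ∃ w, Gm.E v w ∧ w ∉ T) := by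
  constructor
  · intro h0 w hw hT
    exact h (Or.inl ⟨h0, w, hw, hT⟩)
  · intro h1
    by_contra hc
    push Not at hc
    exact h (Or.inr ⟨h1, hc⟩)

lemma Ga_eq (Gm : LiveGameGraph V) (r : ℕ) (A : ℕ → Set V) (Fb Yc : Set V) {a : ℕ}
    (ha : a ∈ Finset.Icc 1 r) :
    gfpSet (HH Gm Fb (A a) Yc (lfpSet (GG Gm r A Fb Yc))) = lfpSet (GG Gm r A Fb Yc) := by
  have hfix := lfp_fix (GG_m Gm r A Fb Yc)
  set L := lfpSet (GG Gm r A Fb Yc) with hL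
  have hsub : ∀ a ∈ Finset.Icc 1 r, gfpSet (HH Gm Fb (A a) Yc L) ⊆ L := by
    intro a ha
    refine Set.Subset.trans ?_ hfix.le
    intro v hv
    exact Set.mem_biUnion ha hv
  refine Set.Subset.antisymm (hsub a ha) ?_
  refine Set.Subset.trans hfix.ge ?_
  refine Set.iUnion₂_subset fun a' ha' => ?_
  intro v hv
  rw [← gfp_fix (HH_m _ _ _ _ _)] at hv ⊢
  rcases hv with hv | ⟨_, hv⟩
  · exact Or.inl hv
  · exact Or.inl (Or.inr (Or.inl (cpre_mono Gm (hsub a' ha') hv)))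

lemma out_L (Gm : LiveGameGraph V) (r : ℕ) (hr : 1 ≤ r) (A : ℕ → Set V) (Fb Yc : Set V) {v : V}
    (hv : v ∉ lfpSet (GG Gm r A Fb Yc)) :
    ¬ (v ∈ Fb ∧ v ∈ Gm.cpre Yc) ∧ v ∉ Gm.cpre (lfpSet (GG Gm r A Fb Yc)) ∧
      ¬ (v ∈ Gm.lpre (lfpSet (GG Gm r A Fb Yc)) ∧ v ∈ Gm.pre1 Yc) := by
  have ha : 1 ∈ Finset.Icc 1 r := by rw [Finset.mem_Icc]; omega
  rw [← Ga_eq Gm r A Fb Yc ha, ← gfp_fix (HH_m _ _ _ _ _)] at hv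
  refine ⟨fun h => hv (Or.inl (Or.inl h)), fun h => hv (Or.inl (Or.inr (Or.inl h))),
    fun h => hv (Or.inl (Or.inr (Or.inr h)))⟩

lemma rank_a [Finite V] (Gm : LiveGameGraph V) (r : ℕ) (A : ℕ → Set V) (Fb Yc : Set V) {a : ℕ}
    (ha : a ∈ Finset.Icc 1 r) :
    ∃ ra : V → ℕ, ∀ v, v ∉ lfpSet (GG Gm r A Fb Yc) → v ∉ A a →
      v ∉ Gm.cpre {w | w ∉ lfpSet (GG Gm r A Fb Yc) ∧ ra w < ra v}ᶜ := by
  obtain ⟨ra, h⟩ := rank_gfp (HH_m Gm Fb (A a) Yc (lfpSet (GG Gm r A Fb Yc)))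
  rw [Ga_eq Gm r A Fb Yc ha] at h
  refine ⟨ra, fun v hv hA hc => ?_⟩
  exact (h (ra v) v).mpr ⟨hv, le_rfl⟩ (Or.inr ⟨hA, hc⟩)

lemma complete [Finite V] (Gm : LiveGameGraph V) (r s : ℕ) (hr : 1 ≤ r) (A F : ℕ → Set V)
    {v0 : V} (hv0 : v0 ∉ gfpSet (PP Gm r s A F)) (ρ0 : List V → V → V)
    (hwin : Gm.WinsFrom (fun π => (∀ a ∈ Finset.Icc 1 r, ∀ N, ∃ i ≥ N, π i ∈ A a) →
          ∀ b ∈ Finset.Icc 1 s, ∀ N, ∃ i ≥ N, π i ∈ F b) ρ0 v0) : False := by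
  classical
  obtain ⟨κ, hκ⟩ := rank_gfp (PP_m Gm r s A F)
  set Z := gfpSet (PP Gm r s A F) with hZdef
  let Y : ℕ → Set V := fun k => {w | w ∉ Z ∧ κ w < k}
  let L : ℕ → ℕ → Set V := fun b k => lfpSet (GG Gm r A (F b) (Y k)ᶜ)
  have hL : ∀ b ∈ Finset.Icc 1 s, ∀ k v, v ∉ L b k → v ∉ Z ∧ κ v ≤ k := by
    intro b hb k v hv
    refine (hκ k v).mp fun h => hv ?_
    exact Set.mem_iInter₂.mp h b hb
  let Q : V → Set ℕ := fun v => {b | b ∈ Finset.Icc 1 s ∧ v ∉ L b (κ v)}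
  let β : V → ℕ := fun v => sInf (Q v)
  have hβ : ∀ v, v ∉ Z → β v ∈ Q v := by
    intro v hv
    apply Nat.sInf_mem
    have h := (hκ (κ v) v).mpr ⟨hv, le_rfl⟩
    by_contra hc
    refine h (Set.mem_iInter₂.mpr fun b hb => ?_)
    by_contra hb2
    exact hc ⟨b, hb, hb2⟩
  have hβs : ∀ v, v ∉ Z → β v ≤ s := fun v hv => (Finset.mem_Icc.mp (hβ v hv).1).2
  let m : V → ℕ := fun v => κ v * (s + 1) + β v
  have hYlt : ∀ v w, w ∈ Y (κ v) → m w < m v := fun v w hw => lexlt (hβs w hw.1) hw.2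
  have hLle : ∀ v, v ∉ Z → ∀ w, w ∉ L (β v) (κ v) → w ∉ Z ∧ m w ≤ m v := by
    intro v hv w hw
    obtain ⟨hwZ, hle⟩ := hL (β v) (hβ v hv).1 (κ v) w hw
    refine ⟨hwZ, ?_⟩
    rcases hle.lt_or_eq with h | h
    · exact (hYlt v w ⟨hwZ, h⟩).le
    · have hmem : β v ∈ Q w := ⟨(hβ v hv).1, by rw [h]; exact hw⟩
      have hle2 : β w ≤ β v := Nat.sInf_le hmem
      show κ w * (s + 1) + β w ≤ κ v * (s + 1) + β v
      rw [h]; omega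
  have hout := fun v (hv : v ∉ Z) => out_L Gm r hr A (F (β v)) (Y (κ v))ᶜ (hβ v hv).2
  let C : V → Set V := fun v => if v ∈ Z then {w | Gm.E v w} else
    if ∃ w, Gm.E v w ∧ w ∈ Y (κ v) then {w | Gm.E v w ∧ w ∈ Y (κ v)} else
      {w | Gm.E v w ∧ w ∉ L (β v) (κ v)}
  have hCE : ∀ v w, w ∈ C v → Gm.E v w := by
    intro v w hw
    simp only [C] at hw
    split_ifs at hw
    · exact hw
    · exact hw.1
    · exact hw.1
  have hCne : ∀ v ∈ Gm.V1, (C v).Nonempty := by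
    intro v hv
    simp only [C]
    split_ifs with h1 h2
    · exact Gm.succ_nonempty v
    · exact h2
    · exact (not_cpre Gm (hout v h1).2.1).2 hv
  have hCY : ∀ v w, v ∉ Z → w ∈ C v → (∃ w, Gm.E v w ∧ w ∈ Y (κ v)) → w ∈ Y (κ v) := by
    intro v w hv hw hex
    simp only [C] at hw
    rw [if_neg hv, if_pos hex] at hw
    exact hw.2
  have hCL : ∀ v, v ∉ Z → (¬ ∃ w, Gm.E v w ∧ w ∈ Y (κ v)) →
      C v = {w | Gm.E v w ∧ w ∉ L (β v) (κ v)} := by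
    intro v hv hex
    simp only [C]
    rw [if_neg hv, if_neg hex]
  obtain ⟨ρ1, π, hρ1, hcomp, hπC, hπI⟩ := exists_play Gm C hCne hCE ρ0 v0
  have hE := compliant_E Gm hwin.1 hρ1 hcomp
  have hstep : ∀ i, π i ∉ Z → π (i + 1) ∉ Z ∧ m (π (i + 1)) ≤ m (π i) := by
    intro i hi
    rcases v0_or_v1 Gm (π i) with h0 | h1
    · exact hLle _ hi _ ((not_cpre Gm (hout _ hi).2.1).1 h0 _ (hE i))
    · have hw := hπC i h1
      by_cases hex : ∃ w, Gm.E (π i) w ∧ w ∈ Y (κ (π i))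
      · have h := hCY _ _ hi hw hex
        exact ⟨h.1, (hYlt _ _ h).le⟩
      · rw [hCL _ hi hex] at hw
        exact hLle _ hi _ hw.2
  have hnZ : ∀ i, π i ∉ Z := by
    intro i
    induction i with
    | zero => rw [hcomp.1]; exact hv0
    | succ i ih => exact (hstep i ih).1
  have hanti : Antitone fun i => m (π i) := antitone_nat_of_succ_le fun i => (hstep i (hnZ i)).2
  obtain ⟨v, M, hvinf, hM⟩ := exists_min π m
  obtain ⟨i0, hi0, hiv⟩ := hvinf M
  have hmc : ∀ i ≥ i0, m (π i) = m v := by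
    intro i hi
    have h1 : m (π i) ≤ m (π i0) := hanti hi
    rw [hiv] at h1
    exact le_antisymm h1 (hM i (by omega)).1
  have hvZ : v ∉ Z := by rw [← hiv]; exact hnZ i0
  have hkb : ∀ i ≥ i0, κ (π i) = κ v ∧ β (π i) = β v :=
    fun i hi => lexenc (hβs _ (hnZ i)) (hβs _ hvZ) (hmc i hi)
  have hYno : ∀ i ≥ i0, π (i + 1) ∉ Y (κ (π i)) := by
    intro i hi h
    have h1 := hYlt _ _ h
    rw [hmc i hi, hmc (i + 1) (by omega)] at h1
    exact lt_irrefl _ h1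
  have hnolow : ∀ i ≥ i0, π i ∈ Gm.V1 → ¬ ∃ w, Gm.E (π i) w ∧ w ∈ Y (κ (π i)) :=
    fun i hi h1 hex => hYno i hi (hCY _ _ (hnZ i) (hπC i h1) hex)
  have hC1 : ∀ i ≥ i0, π i ∈ Gm.V1 → C (π i) = {w | Gm.E (π i) w ∧ w ∉ L (β v) (κ v)} := by
    intro i hi h1
    rw [hCL _ (hnZ i) (hnolow i hi h1), (hkb i hi).1, (hkb i hi).2]
  have hiL : ∀ i ≥ i0, π i ∉ L (β v) (κ v) := by
    intro i hi
    have := (hβ _ (hnZ i)).2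
    rwa [(hkb i hi).1, (hkb i hi).2] at this
  have hnF : ∀ i ≥ i0, π i ∉ F (β v) := by
    intro i hi hF
    have h := (hout _ (hnZ i)).1
    rw [(hkb i hi).2] at h
    have h2 := not_cpre Gm fun hc => h ⟨hF, hc⟩
    rcases v0_or_v1 Gm (π i) with h0 | h1
    · exact hYno i hi (not_not.mp (h2.1 h0 _ (hE i)))
    · obtain ⟨w, hw, hwY⟩ := h2.2 h1
      exact hnolow i hi h1 ⟨w, hw, not_not.mp hwY⟩
  have hfair : Gm.StronglyFair π := by
    intro u w hl hinf
    rw [infinite_iff] at hinf ⊢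
    obtain ⟨hu1, huE⟩ := Gm.live_sub u w hl
    refine hπI u hu1 hinf w ?_
    obtain ⟨i, hi, hiu⟩ := hinf i0
    subst hiu
    rw [hC1 i hi hu1]
    refine ⟨huE, fun hwL => ?_⟩
    have h := (hout _ (hnZ i)).2.2
    refine h ⟨⟨w, hl, ?_⟩, hu1, fun x hx hxY => hnolow i hi hu1 ⟨x, hx, hxY⟩⟩
    rw [(hkb i hi).1, (hkb i hi).2]
    exact hwL
  have hA : ∀ a ∈ Finset.Icc 1 r, ∀ N, ∃ i ≥ N, π i ∈ A a := by
    intro a ha N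
    by_contra hcon
    push Not at hcon
    obtain ⟨ra, hra⟩ := rank_a Gm r A (F (β v)) (Y (κ v))ᶜ ha
    obtain ⟨u, M', huinf, hM'⟩ := exists_min π ra
    obtain ⟨i, hi, hiu⟩ := huinf (max (max i0 M') N)
    subst hiu
    have hii : i ≥ i0 := by omega
    have h := not_cpre Gm (hra (π i) (hiL i hii) (hcon i (by omega)))
    rcases v0_or_v1 Gm (π i) with h0 | h1
    · have h2 := (not_not.mp (h.1 h0 _ (hE i))).2
      have h3 := (hM' (i + 1) (by omega)).1
      omega
    · obtain ⟨w, hw, hwr⟩ := h.2 h1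
      have hwr := not_not.mp hwr
      have hwC : w ∈ C (π i) := by rw [hC1 i hii h1]; exact ⟨hw, hwr.1⟩
      obtain ⟨j, hj, _, hjw⟩ := hπI _ h1 huinf w hwC M'
      have h3 := (hM' (j + 1) (by omega)).1
      rw [hjw] at h3
      have h4 := hwr.2
      omega
  obtain ⟨i, hi, hF⟩ := hwin.2 ρ1 hρ1 π hcomp hfair hA (β v) (hβ v hvZ).1 i0
  exact hnF i hi hF

end FairGR1

/-- the GR(1) fixpoint equals the winning region of Player 0 in the
fair adversarial GR(1) game, and a finite-memory winning Player-0 strategy exists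
on it. -/
theorem fair_adversarial_gr1 {V : Type*} [Fintype V]
    (Gm : LiveGameGraph V) (r s : ℕ) (hr : 1 ≤ r) (hs : 1 ≤ s)
    (A F : ℕ → Set V) (Zstar : Set V)
    (hZ : Zstar = gfpSet fun Yk => ⋂ b ∈ Finset.Icc 1 s, lfpSet fun Xb =>
      ⋃ a ∈ Finset.Icc 1 r, gfpSet fun Ya =>
        (F b ∩ Gm.cpre Yk) ∪ Gm.apre Yk Xb ∪ ((A a)ᶜ ∩ Gm.cpre Ya)) :
    Zstar = Gm.WinningRegion
        (fun π => (∀ a ∈ Finset.Icc 1 r, ∀ N, ∃ i ≥ N, π i ∈ A a) →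
          ∀ b ∈ Finset.Icc 1 s, ∀ N, ∃ i ≥ N, π i ∈ F b) ∧
    ∃ (M : Type) (_ : Fintype M) (m0 : M) (upd : M → V → M) (c : M → V → V),
      (∀ m v, v ∈ Gm.V0 → Gm.E v (c m v)) ∧
      ∀ v0 ∈ Zstar,
        Gm.WinsFrom
          (fun π => (∀ a ∈ Finset.Icc 1 r, ∀ N, ∃ i ≥ N, π i ∈ A a) →
            ∀ b ∈ Finset.Icc 1 s, ∀ N, ∃ i ≥ N, π i ∈ F b)
          (fun h v => c (List.foldl upd m0 h) v) v0 := by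
  have hZ1 : Zstar = gfpSet (FairGR1.PP Gm r s A F) := hZ
  have hfix : FairGR1.PP Gm r s A F Zstar = Zstar := by
    rw [hZ1]; exact FairGR1.gfp_fix (FairGR1.PP_m Gm r s A F)
  obtain ⟨n, rfl⟩ : ∃ n, s = n + 1 := ⟨s - 1, by omega⟩
  obtain ⟨upd, c, hc, hwin⟩ := FairGR1.sound Gm r n A F hfix
  refine ⟨Set.Subset.antisymm (fun v hv => ⟨_, hwin v hv⟩) ?_,
    Fin (n + 1), inferInstance, 0, upd, c, hc, hwin⟩
  rintro v ⟨ρ0, hρ⟩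
  by_contra hv
  rw [hZ1] at hv
  exact FairGR1.complete Gm r (n + 1) hr A F hv ρ0 hρ
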